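/- arXiv:math/9909139 — 2 statements merged into one kernel-verified Lean document; each statement's English description precedes it below -/
import Mathlib

section
/- Let m ≥ 1, n = 2m, and let a₁,…,a_{2m} be real numbers, not all zero. Define G : (0,∞) → ℝ by G(t) = t^{2m−1} ∫_{‖ω‖≤1, ω∈ℝ^{2m}} cos(tω₁a₁)⋯cos(tω_{2m}a_{2m}) · (1−‖ω‖²)^{−1/2} dω. Then for every t > 0, sin(t·√(a₁²+⋯+a_{2m}²)) / √(a₁²+⋯+a_{2m}²) = (1/(2π)^m) · (D^{m−1}G)(t). -/
open MeasureTheory Real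

/-- The operator `(Df)(t) = f'(t)/t` on real-valued functions. -/
noncomputable def Dop (f : ℝ → ℝ) : ℝ → ℝ := fun t => deriv f t / t

/-- The Poisson-type integral `∫_{-1}^1 cos (r t x) (1 - x²)^k dx`. -/
noncomputable def poissonIntegral (r : ℝ) (k : ℕ) (t : ℝ) : ℝ :=
  ∫ x in (-1 : ℝ)..1, cos (t * r * x) * (1 - x ^ 2) ^ k

lemma hasDerivAt_poissonIntegral (r : ℝ) (k : ℕ) (t : ℝ) :
    HasDerivAt (poissonIntegral r k)
      (∫ x in (-1 : ℝ)..1, -sin (t * r * x) * (r * x) * (1 - x ^ 2) ^ k) t := by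
  unfold poissonIntegral
  refine (intervalIntegral.hasDerivAt_integral_of_dominated_loc_of_deriv_le (s := Set.univ)
    (F := fun s x => cos (s * r * x) * (1 - x ^ 2) ^ k)
    (F' := fun s x => -sin (s * r * x) * (r * x) * (1 - x ^ 2) ^ k)
    (bound := fun x => |r * x| * |(1 - x ^ 2) ^ k|) Filter.univ_mem
    (.of_forall fun s => (by fun_prop : Continuous _).aestronglyMeasurable)
    ((by fun_prop : Continuous _).intervalIntegrable _ _)
    ((by fun_prop : Continuous _).aestronglyMeasurable) ?_
    ((by fun_prop : Continuous _).intervalIntegrable _ _) ?_).2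
  · refine .of_forall fun x _ s _ => ?_
    rw [Real.norm_eq_abs, abs_mul, abs_mul, abs_neg]
    gcongr
    exact mul_le_of_le_one_left (abs_nonneg _) (abs_sin_le_one _)
  · refine .of_forall fun x _ s _ => ?_
    have h : HasDerivAt (fun u : ℝ => u * r * x) (r * x) s := by
      simpa [mul_assoc] using (hasDerivAt_id s).mul_const (r * x)
    exact (h.cos).mul_const _

lemma mul_deriv_poissonIntegral_succ (r : ℝ) (k : ℕ) (t : ℝ) :
    t * (∫ x in (-1 : ℝ)..1, -sin (t * r * x) * (r * x) * (1 - x ^ 2) ^ (k + 1)) =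
      2 * (k + 1) * poissonIntegral r k t - (2 * k + 3) * poissonIntegral r (k + 1) t := by
  have hparts := intervalIntegral.integral_mul_deriv_eq_deriv_mul (a := -1) (b := 1)
    (u := fun x : ℝ => x * (1 - x ^ 2) ^ (k + 1)) (v := fun x => cos (t * r * x))
    (u' := fun x => (2 * k + 3) * (1 - x ^ 2) ^ (k + 1) - 2 * (k + 1) * (1 - x ^ 2) ^ k)
    (v' := fun x => -sin (t * r * x) * (t * r)) ?_ ?_
    ((by fun_prop : Continuous _).intervalIntegrable _ _)
    ((by fun_prop : Continuous _).intervalIntegrable _ _)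
  · have hint (j : ℕ) : IntervalIntegrable
        (fun x : ℝ => cos (t * r * x) * (1 - x ^ 2) ^ j) volume (-1) 1 :=
      (by fun_prop : Continuous _).intervalIntegrable _ _
    unfold poissonIntegral
    rw [← intervalIntegral.integral_const_mul, ← intervalIntegral.integral_const_mul,
      ← intervalIntegral.integral_const_mul,
      ← intervalIntegral.integral_sub ((hint k).const_mul _) ((hint (k + 1)).const_mul _)]
    calc _ = ∫ x in (-1 : ℝ)..1,
          x * (1 - x ^ 2) ^ (k + 1) * (-sin (t * r * x) * (t * r)) := by congr 1; ext x; ring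
      _ = _ := by
        rw [hparts]
        norm_num
        rw [← intervalIntegral.integral_neg]
        congr 1; ext x; ring
  · intro x _
    have h := (hasDerivAt_id x).mul ((((hasDerivAt_id x).pow 2).const_sub 1).pow (k + 1))
    refine h.congr_deriv ?_
    simp
    ring
  · intro x _
    have h : HasDerivAt (fun x : ℝ => t * r * x) (t * r) x := by
      simpa using (hasDerivAt_id x).const_mul (t * r)
    exact h.cos

lemma Dop_poissonIntegral_succ (r c : ℝ) (k : ℕ) {f : ℝ → ℝ}
    (hf : ∀ t > 0, f t = c * (t ^ (2 * (k + 1) + 1) * poissonIntegral r (k + 1) t)) {t : ℝ}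
    (ht : 0 < t) :
    Dop f t = c * (2 * (k + 1)) * (t ^ (2 * k + 1) * poissonIntegral r k t) := by
  have heq : f =ᶠ[nhds t] fun t => c * (t ^ (2 * (k + 1) + 1) * poissonIntegral r (k + 1) t) :=
    Filter.eventually_of_mem (Ioi_mem_nhds ht) hf
  have hd := (((hasDerivAt_pow (2 * (k + 1) + 1) t).mul
    (hasDerivAt_poissonIntegral r (k + 1) t)).const_mul c)
  have hrec := mul_deriv_poissonIntegral_succ r k t
  rw [Dop, heq.deriv_eq, div_eq_iff ht.ne']
  refine hd.deriv.trans ?_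
  rw [show 2 * (k + 1) + 1 - 1 = 2 * k + 2 by omega]
  push_cast
  linear_combination c * t ^ (2 * k + 2) * hrec

lemma Dop_iterate_poissonIntegral (r : ℝ) (k : ℕ) : ∀ (c : ℝ) (f : ℝ → ℝ),
    (∀ t > 0, f t = c * (t ^ (2 * k + 1) * poissonIntegral r k t)) →
    ∀ t > 0, Dop^[k] f t = c * 2 ^ k * k.factorial * (t * poissonIntegral r 0 t) := by
  induction k with
  | zero => intro c f hf t ht; simp [hf t ht]
  | succ k ih =>
    intro c f hf t ht
    rw [Function.iterate_succ_apply,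
      ih (c * (2 * (k + 1))) (Dop f) (fun s hs => Dop_poissonIntegral_succ r c k hf hs) t ht,
      Nat.factorial_succ]
    push_cast
    ring

lemma mul_poissonIntegral_zero {r : ℝ} (hr : r ≠ 0) {t : ℝ} (ht : t ≠ 0) :
    t * poissonIntegral r 0 t = 2 * (sin (t * r) / r) := by
  have h : poissonIntegral r 0 t = ∫ x in (-1 : ℝ)..1, cos ((t * r) * x) := by
    simp [poissonIntegral]
  rw [h, intervalIntegral.integral_comp_mul_left _ (mul_ne_zero ht hr), integral_cos]
  simp
  field_simp
  ring

lemma sin_image_Ioo : sin '' Set.Ioo 0 (π / 2) = Set.Ioo 0 1 := by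
  ext y
  constructor
  · rintro ⟨x, ⟨h0, h1⟩, rfl⟩
    refine ⟨sin_pos_of_pos_of_lt_pi h0 (by linarith), ?_⟩
    simpa using sin_lt_sin_of_lt_of_le_pi_div_two (by linarith) le_rfl h1
  · rintro ⟨h0, h1⟩
    exact ⟨arcsin y, ⟨arcsin_pos.2 h0, arcsin_lt_pi_div_two.2 h1⟩,
      sin_arcsin (by linarith) h1.le⟩

lemma injOn_sin_Ioo : Set.InjOn sin (Set.Ioo 0 (π / 2)) :=
  injOn_sin.mono (Set.Ioo_subset_Icc_self.trans
    (Set.Icc_subset_Icc_left (by linarith [pi_pos])))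

lemma abs_cos_smul_sin_weight (n : ℕ) {θ : ℝ} (hθ : θ ∈ Set.Ioo 0 (π / 2)) :
    |cos θ| • (sin θ ^ n * (√(1 - sin θ ^ 2))⁻¹) = sin θ ^ n := by
  have h : 0 < cos θ := cos_pos_of_mem_Ioo ⟨by linarith [hθ.1, hθ.2], hθ.2⟩
  rw [← cos_sq', sqrt_sq h.le, abs_of_pos h, smul_eq_mul]
  field_simp

lemma integrableOn_Ioi_pow_mul_inv_sqrt (n : ℕ) :
    IntegrableOn (fun y : ℝ => y ^ n • (√(1 - y ^ 2))⁻¹) (Set.Ioi 0) := by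
  have h : IntegrableOn (fun y : ℝ => y ^ n • (√(1 - y ^ 2))⁻¹) (Set.Ioo 0 1) := by
    rw [← sin_image_Ioo, integrableOn_image_iff_integrableOn_abs_deriv_smul measurableSet_Ioo
      (fun x _ => (hasDerivAt_sin x).hasDerivWithinAt) injOn_sin_Ioo]
    refine IntegrableOn.congr_fun (f := fun θ => sin θ ^ n) ?_
      (fun θ hθ => (abs_cos_smul_sin_weight n hθ).symm) measurableSet_Ioo
    exact (by fun_prop : Continuous fun θ : ℝ => sin θ ^ n).integrableOn_Icc.mono_set
      Set.Ioo_subset_Icc_self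
  refine h.of_forall_sdiff_eq_zero measurableSet_Ioi fun y hy => ?_
  have : 1 ≤ y := by
    by_contra! h1
    exact hy.2 ⟨hy.1, h1⟩
  rw [sqrt_eq_zero_of_nonpos (by nlinarith)]
  simp

lemma integral_Ioi_pow_mul_inv_sqrt (n : ℕ) :
    ∫ y in Set.Ioi (0 : ℝ), y ^ n • (√(1 - y ^ 2))⁻¹ = ∫ θ in (0 : ℝ)..π / 2, sin θ ^ n := by
  have h : ∫ y in Set.Ioo (0 : ℝ) 1, y ^ n • (√(1 - y ^ 2))⁻¹ =
      ∫ y in Set.Ioi (0 : ℝ), y ^ n • (√(1 - y ^ 2))⁻¹ := by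
    refine (setIntegral_eq_of_subset_of_forall_sdiff_eq_zero measurableSet_Ioi
      (fun y hy => hy.1) fun y hy => ?_).symm
    have : 1 ≤ y := by
      by_contra! h1
      exact hy.2 ⟨hy.1, h1⟩
    rw [sqrt_eq_zero_of_nonpos (by nlinarith)]
    simp
  rw [← h, ← sin_image_Ioo, integral_image_eq_integral_abs_deriv_smul measurableSet_Ioo
      (fun x _ => (hasDerivAt_sin x).hasDerivWithinAt) injOn_sin_Ioo,
    intervalIntegral.integral_of_le (by positivity), integral_Ioc_eq_integral_Ioo]
  exact setIntegral_congr_fun measurableSet_Ioo fun θ hθ => abs_cos_smul_sin_weight n hθ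

lemma integrable_inv_sqrt_one_sub_norm_sq {E : Type*} [NormedAddCommGroup E] [NormedSpace ℝ E]
    [Nontrivial E] [FiniteDimensional ℝ E] [MeasurableSpace E] [BorelSpace E] (μ : Measure E)
    [μ.IsAddHaarMeasure] : Integrable (fun x : E => (√(1 - ‖x‖ ^ 2))⁻¹) μ :=
  (integrable_fun_norm_addHaar μ (f := fun s => (√(1 - s ^ 2))⁻¹)).2
    (integrableOn_Ioi_pow_mul_inv_sqrt _)

lemma integral_sin_pow_even_half (k : ℕ) :
    (2 * k + 1) * (√π ^ (2 * k + 1) / Gamma ((2 * k + 1) / 2 + 1)) *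
      ∫ θ in (0 : ℝ)..π / 2, sin θ ^ (2 * k) = π ^ (k + 1) / k.factorial := by
  induction k with
  | zero =>
    have hG : Gamma (1 / 2 + 1) = 1 / 2 * √π := by
      rw [Gamma_add_one (by norm_num), Gamma_one_half_eq]
    have : √π ≠ 0 := by positivity
    simp
    rw [show (2 : ℝ)⁻¹ + 1 = 1 / 2 + 1 by norm_num, hG]
    field_simp
  | succ k ih =>
    have hG : Gamma ((2 * (k + 1 : ℕ) + 1) / 2 + 1) =
        ((2 * k + 1) / 2 + 1) * Gamma ((2 * k + 1) / 2 + 1) := by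
      rw [← Gamma_add_one (by positivity)]
      congr 1
      push_cast
      ring
    have hpos : 0 < Gamma ((2 * k + 1) / 2 + 1) := Gamma_pos_of_pos (by positivity)
    have hpi : √π ^ (2 * (k + 1) + 1) = √π ^ (2 * k + 1) * π := by
      rw [show 2 * (k + 1) + 1 = 2 * k + 1 + 2 by ring, pow_add, sq_sqrt pi_pos.le]
    have hfac : π ^ (k + 1 + 1) / (k + 1).factorial =
        π ^ (k + 1) / k.factorial * (π / (k + 1)) := by
      rw [Nat.factorial_succ, mul_comm (k + 1), Nat.cast_mul, pow_succ π (k + 1), mul_div_mul_comm]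
      push_cast
      rfl
    rw [hG, hpi, hfac, ← ih, show 2 * (k + 1) = 2 * k + 2 by ring, integral_sin_pow]
    simp
    field_simp
    ring

lemma integral_inv_sqrt_one_sub_norm_sq (k : ℕ) :
    ∫ x : EuclideanSpace ℝ (Fin (2 * k + 1)), (√(1 - ‖x‖ ^ 2))⁻¹ =
      π ^ (k + 1) / k.factorial := by
  rw [integral_fun_norm_addHaar volume (fun s => (√(1 - s ^ 2))⁻¹), finrank_euclideanSpace_fin,
    integral_Ioi_pow_mul_inv_sqrt, ← integral_sin_pow_even_half, measureReal_def,
    EuclideanSpace.volume_ball]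
  have hpos : 0 < Gamma ((2 * k + 1) / 2 + 1) := Gamma_pos_of_pos (by positivity)
  simp [ENNReal.toReal_ofReal (show 0 ≤ √π ^ (2 * k + 1) / Gamma ((2 * k + 1) / 2 + 1) by
    positivity)]
  ring

lemma integral_inv_sqrt_sub_norm_sq (k : ℕ) {b : ℝ} (hb : 0 < b) :
    ∫ x : EuclideanSpace ℝ (Fin (2 * k + 1)), (√(b - ‖x‖ ^ 2))⁻¹ =
      π ^ (k + 1) / k.factorial * b ^ k := by
  have h := Measure.integral_comp_smul (volume : Measure (EuclideanSpace ℝ (Fin (2 * k + 1))))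
    (fun x => (√(b - ‖x‖ ^ 2))⁻¹) (√b)
  have hs : 0 < √b := sqrt_pos.2 hb
  have h' (x : EuclideanSpace ℝ (Fin (2 * k + 1))) :
      (√(b - ‖√b • x‖ ^ 2))⁻¹ = (√b)⁻¹ * (√(1 - ‖x‖ ^ 2))⁻¹ := by
    rw [norm_smul, mul_pow, norm_of_nonneg hs.le, sq_sqrt hb.le, ← mul_one_sub,
      sqrt_mul hb.le, mul_inv]
  simp only [h', integral_const_mul, integral_inv_sqrt_one_sub_norm_sq,
    finrank_euclideanSpace_fin, smul_eq_mul] at h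
  rw [abs_of_pos (by positivity), inv_mul_eq_div, inv_mul_eq_div, div_eq_div_iff hs.ne'
    (by positivity), pow_succ √b, pow_mul √b, sq_sqrt hb.le] at h
  have := mul_right_cancel₀ hs.ne' ((mul_assoc _ _ _).trans h)
  exact this.symm

lemma integral_eq_zero_of_comp_linearIsometryEquiv_eq_neg {E : Type*} [NormedAddCommGroup E]
    [InnerProductSpace ℝ E] [FiniteDimensional ℝ E] [MeasurableSpace E] [BorelSpace E]
    (R : E ≃ₗᵢ[ℝ] E) {f : E → ℝ} (hf : ∀ x, f (R x) = -f x) : ∫ x, f x = 0 := by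
  have h := R.measurePreserving.integral_comp R.toHomeomorph.measurableEmbedding f
  simp only [hf, integral_neg] at h
  linarith

lemma abs_finset_prod_cos_le_one {ι : Type*} (S : Finset ι) (x : ι → ℝ) :
    |∏ i ∈ S, cos (x i)| ≤ 1 := by
  rw [Finset.abs_prod]
  exact Finset.prod_le_one (fun _ _ => abs_nonneg _) fun _ _ => abs_cos_le_one _

lemma integral_prod_cos_mul_cos_sum {ι : Type*} [Fintype ι] [DecidableEq ι] (b : ι → ℝ)
    {w : ℝ → ℝ} (hw : Integrable fun x : EuclideanSpace ℝ ι => w ‖x‖) (S : Finset ι) :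
    ∫ x : EuclideanSpace ℝ ι,
        (∏ i ∈ S, cos (b i * x i)) * cos (∑ i ∈ Sᶜ, b i * x i) * w ‖x‖ =
      ∫ x : EuclideanSpace ℝ ι, cos (∑ i, b i * x i) * w ‖x‖ := by
  induction S using Finset.induction_on with
  | empty => simp
  | insert j S hj ih =>
    rw [← ih]
    let R : EuclideanSpace ℝ ι ≃ₗᵢ[ℝ] EuclideanSpace ℝ ι :=
      LinearIsometryEquiv.piLpCongrRight 2
        fun i => if i = j then LinearIsometryEquiv.neg ℝ else LinearIsometryEquiv.refl ℝ ℝ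
    have hRj (x) : (R x) j = -x j := by simp [R]
    have hR (x) (i) (hi : i ≠ j) : (R x) i = x i := by simp [R, hi]
    have hcompl : Sᶜ = insert j (insert j S)ᶜ := by
      ext i
      by_cases h : i = j <;> simp [h, hj]
    have hodd : ∫ x : EuclideanSpace ℝ ι, ((∏ i ∈ S, cos (b i * x i)) *
        (sin (b j * x j) * sin (∑ i ∈ (insert j S)ᶜ, b i * x i))) * w ‖x‖ = 0 := by
      refine integral_eq_zero_of_comp_linearIsometryEquiv_eq_neg R fun x => ?_
      have h1 : ∏ i ∈ S, cos (b i * (R x) i) = ∏ i ∈ S, cos (b i * x i) :=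
        Finset.prod_congr rfl fun i hi => by rw [hR x i (ne_of_mem_of_not_mem hi hj)]
      have h2 : ∑ i ∈ (insert j S)ᶜ, b i * (R x) i = ∑ i ∈ (insert j S)ᶜ, b i * x i :=
        Finset.sum_congr rfl fun i hi => by
          rw [hR x i]
          rintro rfl
          simp at hi
      rw [h1, h2, hRj, R.norm_map, mul_neg, sin_neg]
      ring
    have hint1 : Integrable fun x : EuclideanSpace ℝ ι => ((∏ i ∈ S, cos (b i * x i)) *
        (cos (b j * x j) * cos (∑ i ∈ (insert j S)ᶜ, b i * x i))) * w ‖x‖ := by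
      refine hw.bdd_mul (c := 1) (by fun_prop : Continuous _).aestronglyMeasurable
        (.of_forall fun x => ?_)
      rw [norm_mul, norm_mul]
      exact mul_le_one₀ (abs_finset_prod_cos_le_one _ _) (by positivity)
        (mul_le_one₀ (abs_cos_le_one _) (by positivity) (abs_cos_le_one _))
    have hint2 : Integrable fun x : EuclideanSpace ℝ ι => ((∏ i ∈ S, cos (b i * x i)) *
        (sin (b j * x j) * sin (∑ i ∈ (insert j S)ᶜ, b i * x i))) * w ‖x‖ := by
      refine hw.bdd_mul (c := 1) (by fun_prop : Continuous _).aestronglyMeasurable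
        (.of_forall fun x => ?_)
      rw [norm_mul, norm_mul]
      exact mul_le_one₀ (abs_finset_prod_cos_le_one _ _) (by positivity)
        (mul_le_one₀ (abs_sin_le_one _) (by positivity) (abs_sin_le_one _))
    have hsplit := integral_sub hint1 hint2
    rw [hodd, sub_zero] at hsplit
    calc _ = _ := by
          congr 1; ext x
          rw [Finset.prod_insert hj]
          ring
      _ = _ := hsplit.symm
      _ = _ := by
          congr 1; ext x
          rw [hcompl, Finset.sum_insert (by simp), cos_add]
          ring

lemma integral_comp_inner_mul_fun_norm {E : Type*} [NormedAddCommGroup E]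
    [InnerProductSpace ℝ E] [FiniteDimensional ℝ E] [MeasurableSpace E] [BorelSpace E]
    {u v : E} (huv : ‖u‖ = ‖v‖) (g w : ℝ → ℝ) :
    ∫ x, g (inner ℝ u x) * w ‖x‖ = ∫ x, g (inner ℝ v x) * w ‖x‖ := by
  let R : E ≃ₗᵢ[ℝ] E := (ℝ ∙ (u - v))ᗮ.reflection
  have hR : R u = v := Submodule.reflection_sub huv
  have h := R.measurePreserving.integral_comp R.toHomeomorph.measurableEmbedding
    fun x => g (inner ℝ v x) * w ‖x‖
  rw [← h]
  congr 1; ext x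
  rw [← hR, R.inner_map_map, R.norm_map]

/-- Splitting off the first coordinate, as a measurable equivalence. -/
noncomputable def euclideanConsEquiv (n : ℕ) :
    EuclideanSpace ℝ (Fin (n + 1)) ≃ᵐ ℝ × EuclideanSpace ℝ (Fin n) :=
  (MeasurableEquiv.toLp 2 (Fin (n + 1) → ℝ)).symm.trans
    ((MeasurableEquiv.piFinSuccAbove (fun _ => ℝ) 0).trans
      ((MeasurableEquiv.refl ℝ).prodCongr (MeasurableEquiv.toLp 2 (Fin n → ℝ))))

lemma measurePreserving_euclideanConsEquiv (n : ℕ) :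
    MeasurePreserving (euclideanConsEquiv n) volume volume :=
  (((MeasurePreserving.id volume).prod (PiLp.volume_preserving_toLp (Fin n))).comp
    (volume_preserving_piFinSuccAbove (fun _ => ℝ) 0)).comp
      (PiLp.volume_preserving_ofLp (Fin (n + 1)))

lemma euclideanConsEquiv_fst (n : ℕ) (x : EuclideanSpace ℝ (Fin (n + 1))) :
    (euclideanConsEquiv n x).1 = x 0 := rfl

lemma norm_sq_eq_euclideanConsEquiv (n : ℕ) (x : EuclideanSpace ℝ (Fin (n + 1))) :
    ‖x‖ ^ 2 = (euclideanConsEquiv n x).1 ^ 2 + ‖(euclideanConsEquiv n x).2‖ ^ 2 := by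
  rw [EuclideanSpace.real_norm_sq_eq, EuclideanSpace.real_norm_sq_eq, Fin.sum_univ_succ]
  rfl

lemma integral_cos_coord_mul_inv_sqrt (k : ℕ) (s : ℝ) :
    ∫ x : EuclideanSpace ℝ (Fin (2 * k + 1 + 1)), cos (s * x 0) * (√(1 - ‖x‖ ^ 2))⁻¹ =
      π ^ (k + 1) / k.factorial * ∫ x in (-1 : ℝ)..1, cos (s * x) * (1 - x ^ 2) ^ k := by
  let g : ℝ × EuclideanSpace ℝ (Fin (2 * k + 1)) → ℝ :=
    fun p => cos (s * p.1) * (√(1 - p.1 ^ 2 - ‖p.2‖ ^ 2))⁻¹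
  have hmp := measurePreserving_euclideanConsEquiv (2 * k + 1)
  have hg : (fun x : EuclideanSpace ℝ (Fin (2 * k + 1 + 1)) =>
      cos (s * x 0) * (√(1 - ‖x‖ ^ 2))⁻¹) = g ∘ euclideanConsEquiv (2 * k + 1) := by
    ext x
    simp only [g, Function.comp_apply]
    rw [norm_sq_eq_euclideanConsEquiv, sub_sub, euclideanConsEquiv_fst]
  have hint : Integrable g := by
    rw [← hmp.integrable_comp_emb (MeasurableEquiv.measurableEmbedding _), ← hg]
    exact (integrable_inv_sqrt_one_sub_norm_sq volume).bdd_mul (c := 1)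
      (by fun_prop : Continuous _).aestronglyMeasurable (.of_forall fun x => abs_cos_le_one _)
  rw [hg]
  refine (hmp.integral_comp' g).trans ?_
  rw [Measure.volume_eq_prod, integral_prod _ hint, intervalIntegral.integral_of_le (by norm_num),
    integral_Ioc_eq_integral_Ioo, ← integral_const_mul,
    ← setIntegral_eq_integral_of_forall_compl_eq_zero (s := Set.Ioo (-1 : ℝ) 1)]
  · refine setIntegral_congr_fun measurableSet_Ioo fun x hx => ?_
    have hb : 0 < 1 - x ^ 2 := by nlinarith [hx.1, hx.2]
    simp only [g]
    rw [integral_const_mul, integral_inv_sqrt_sub_norm_sq k hb]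
    ring
  · intro x hx
    have hb : 1 - x ^ 2 ≤ 0 := by
      by_contra! h
      exact hx (abs_lt.1 ((sq_lt_one_iff_abs_lt_one x).1 (by linarith)))
    have (y : EuclideanSpace ℝ (Fin (2 * k + 1))) : g (x, y) = 0 := by
      simp only [g]
      rw [sqrt_eq_zero_of_nonpos (by nlinarith [sq_nonneg ‖y‖])]
      simp
    simp [this]

lemma rpow_neg_one_div_two (u : ℝ) : u ^ (-(1 : ℝ) / 2) = (√u)⁻¹ := by
  rcases lt_or_ge u 0 with hu | hu
  · rw [rpow_def_of_neg hu, sqrt_eq_zero_of_nonpos hu.le,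
      show -(1 : ℝ) / 2 * π = -(π / 2) by ring, cos_neg, cos_pi_div_two]
    simp
  · rw [sqrt_eq_rpow, ← rpow_neg hu, neg_div]

lemma setIntegral_closedBall_prod_cos (k : ℕ) (a : Fin (2 * k + 1 + 1) → ℝ) (t : ℝ) :
    ∫ ω in Metric.closedBall (0 : EuclideanSpace ℝ (Fin (2 * k + 1 + 1))) 1,
        (∏ i, cos (t * ω i * a i)) * (1 - ‖ω‖ ^ 2) ^ (-(1 : ℝ) / 2) =
      π ^ (k + 1) / k.factorial * poissonIntegral (√(∑ i, a i ^ 2)) k t := by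
  simp only [rpow_neg_one_div_two]
  rw [setIntegral_eq_integral_of_forall_compl_eq_zero]
  · have hprod := integral_prod_cos_mul_cos_sum (fun i => t * a i)
      (w := fun s => (√(1 - s ^ 2))⁻¹) (integrable_inv_sqrt_one_sub_norm_sq volume) Finset.univ
    have hnorm : ‖WithLp.toLp 2 a‖ =
        ‖EuclideanSpace.single (0 : Fin (2 * k + 1 + 1)) (√(∑ i, a i ^ 2))‖ := by
      rw [PiLp.norm_single, EuclideanSpace.norm_eq, norm_of_nonneg (sqrt_nonneg _)]
      simp
    have hrot := integral_comp_inner_mul_fun_norm hnorm (fun y => cos (t * y))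
      (fun s => (√(1 - s ^ 2))⁻¹)
    calc _ = ∫ ω : EuclideanSpace ℝ (Fin (2 * k + 1 + 1)),
          cos (∑ i, t * a i * ω i) * (√(1 - ‖ω‖ ^ 2))⁻¹ := by
          rw [← hprod]
          simp [mul_right_comm t]
      _ = ∫ ω : EuclideanSpace ℝ (Fin (2 * k + 1 + 1)),
          cos (t * √(∑ i, a i ^ 2) * ω 0) * (√(1 - ‖ω‖ ^ 2))⁻¹ := by
          convert hrot using 5 with ω ω
          · simp [PiLp.inner_apply, Finset.mul_sum, mul_assoc, mul_comm]
          · simp [EuclideanSpace.inner_single_left, mul_assoc]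
      _ = _ := integral_cos_coord_mul_inv_sqrt k _
  · intro ω hω
    have : 1 < ‖ω‖ := by simpa using hω
    rw [sqrt_eq_zero_of_nonpos (by nlinarith)]
    simp

theorem stmt9 (m : ℕ) (hm : 1 ≤ m) (a : Fin (2*m) → ℝ) (ha : a ≠ 0)
    (G : ℝ → ℝ)
    (hG : ∀ t : ℝ, G t = t ^ (2*m-1) *
      ∫ ω in Metric.closedBall (0 : EuclideanSpace ℝ (Fin (2*m))) 1,
        (∏ i, Real.cos (t * ω i * a i)) * (1 - ‖ω‖^2) ^ (-(1:ℝ)/2)) :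
    ∀ t ∈ Set.Ioi (0:ℝ),
      Real.sin (t * Real.sqrt (∑ i, (a i)^2)) / Real.sqrt (∑ i, (a i)^2) =
        (1 / (2*π)^m) * (Dop^[m-1] G) t := by
  obtain ⟨k, rfl⟩ : ∃ k, m = k + 1 := ⟨m - 1, by omega⟩
  intro t ht
  have hr : √(∑ i, (a i) ^ 2) ≠ 0 := by
    obtain ⟨i, hi⟩ := Function.ne_iff.1 ha
    have hpos : 0 < ∑ i, (a i) ^ 2 := Finset.sum_pos' (fun j _ => sq_nonneg _)
      ⟨i, Finset.mem_univ i, sq_pos_of_ne_zero hi⟩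
    exact (sqrt_pos.2 hpos).ne'
  have hG' : ∀ s > 0, G s = π ^ (k + 1) / k.factorial *
      (s ^ (2 * k + 1) * poissonIntegral (√(∑ i, (a i) ^ 2)) k s) := by
    intro s _
    rw [hG, show 2 * (k + 1) - 1 = 2 * k + 1 by omega, mul_left_comm]
    exact congrArg _ (setIntegral_closedBall_prod_cos k a s)
  rw [Nat.add_sub_cancel, Dop_iterate_poissonIntegral _ k _ G hG' t ht,
    mul_poissonIntegral_zero hr (ne_of_gt ht), mul_pow 2 π, pow_succ 2]
  have := pi_pos
  field_simp
end

section
/- Let m ≥ 1, n = 2m+1, and let a₁,…,aₙ be real numbers, not all zero. Define G : (0,∞) → ℝ by G(t) = t^{2m−1} ∫_{S^{2m}} cos(tω₁a₁)⋯cos(tωₙaₙ) dσ(ω). Then for every t > 0, sin(t·√(a₁²+⋯+aₙ²)) / √(a₁²+⋯+aₙ²) = (1/(2(2π)^m)) · (D^{m−1}G)(t). -/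
open MeasureTheory Real

/-- The radial Gaussian moment `∫₀^∞ x ^ (2k) exp (-x² / 2) dx`. -/
noncomputable def halfGaussianMoment (k : ℕ) : ℝ :=
  ∫ x in Set.Ioi (0 : ℝ), x ^ (2 * k) * exp (-x ^ 2 / 2)

lemma halfGaussianMoment_eq (k : ℕ) :
    halfGaussianMoment k = (1 / 2 : ℝ) ^ (-((k : ℝ) + 1 / 2)) * (1 / 2) * Gamma (k + 1 / 2) := by
  have h := integral_rpow_mul_exp_neg_mul_rpow (p := 2) (q := 2 * (k : ℝ)) (b := 1 / 2)
    (by norm_num) (by linarith [Nat.cast_nonneg (α := ℝ) k]) (by norm_num)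
  rw [show -(2 * (k : ℝ) + 1) / 2 = -((k : ℝ) + 1 / 2) by ring,
    show (2 * (k : ℝ) + 1) / 2 = k + 1 / 2 by ring] at h
  rw [← h, halfGaussianMoment]
  refine setIntegral_congr_fun measurableSet_Ioi fun x _ => ?_
  rw [show (2 * (k : ℝ)) = ((2 * k : ℕ) : ℝ) by push_cast; ring]
  simp only [rpow_natCast, rpow_two]
  ring_nf

lemma halfGaussianMoment_pos (k : ℕ) : 0 < halfGaussianMoment k := by
  rw [halfGaussianMoment_eq]
  have := Gamma_pos_of_pos (show (0 : ℝ) < k + 1 / 2 by positivity)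
  positivity

lemma halfGaussianMoment_succ (k : ℕ) :
    halfGaussianMoment (k + 1) = (2 * k + 1) * halfGaussianMoment k := by
  rw [halfGaussianMoment_eq, halfGaussianMoment_eq, Nat.cast_succ,
    show (k : ℝ) + 1 + 1 / 2 = (k + 1 / 2) + 1 by ring,
    Gamma_add_one (by positivity), neg_add ((k : ℝ) + 1 / 2) 1, rpow_add (by norm_num),
    rpow_neg_one]
  ring

lemma halfGaussianMoment_add (k m : ℕ) :
    halfGaussianMoment (k + m) =
      (∏ i ∈ Finset.range m, (2 * (k : ℝ) + 2 * i + 1)) * halfGaussianMoment k := by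
  induction m with
  | zero => simp
  | succ m ih =>
    rw [← add_assoc, halfGaussianMoment_succ, ih, Finset.prod_range_succ]
    push_cast
    ring

lemma integral_even_pow_mul_exp_neg_sq_div_two (k : ℕ) :
    ∫ x : ℝ, x ^ (2 * k) * exp (-x ^ 2 / 2) = 2 * halfGaussianMoment k := by
  rw [halfGaussianMoment, ← integral_comp_abs (f := fun x => x ^ (2 * k) * exp (-x ^ 2 / 2))]
  simp only [pow_mul, sq_abs]

lemma integral_exp_neg_norm_sq_mul_inner_pow {n : ℕ} (u : EuclideanSpace ℝ (Fin (n + 1)))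
    (hu : ‖u‖ = 1) (k : ℕ) :
    ∫ x : EuclideanSpace ℝ (Fin (n + 1)), exp (-‖x‖ ^ 2 / 2) * inner ℝ u x ^ (2 * k) =
      √(2 * π) ^ n * (2 * halfGaussianMoment k) := by
  obtain ⟨b, hb⟩ := Orthonormal.exists_orthonormalBasis_extension_of_card_eq (𝕜 := ℝ)
    (E := EuclideanSpace ℝ (Fin (n + 1))) (ι := Fin (n + 1)) (by simp)
    (v := fun _ => u) (s := {0}) (by
      constructor
      · intro i; simpa using hu
      · intro i j hij; exact absurd (Subsingleton.elim i j) hij)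
  have hb0 : b 0 = u := hb 0 rfl
  have h1 := b.measurePreserving_repr.integral_comp b.repr.toHomeomorph.measurableEmbedding
    (fun y : EuclideanSpace ℝ (Fin (n + 1)) => exp (-‖y‖ ^ 2 / 2) * y 0 ^ (2 * k))
  simp only [LinearIsometryEquiv.norm_map, OrthonormalBasis.repr_apply_apply, hb0] at h1
  rw [h1, ← (EuclideanSpace.volume_preserving_symm_measurableEquiv_toLp
    (Fin (n + 1))).symm.integral_comp (MeasurableEquiv.measurableEmbedding _)]
  have h2 : ∀ y : Fin (n + 1) → ℝ,
      exp (-‖WithLp.toLp 2 y‖ ^ 2 / 2) * y 0 ^ (2 * k) =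
        ∏ i, (if i = 0 then y i ^ (2 * k) * exp (-y i ^ 2 / 2) else exp (-y i ^ 2 / 2)) := by
    intro y
    rw [EuclideanSpace.norm_sq_eq, Fin.prod_univ_succ]
    simp only [Fin.succ_ne_zero, if_true, if_false, norm_eq_abs, sq_abs, Fin.sum_univ_succ]
    rw [← exp_sum, mul_assoc, ← exp_add, ← Finset.sum_div, Finset.sum_neg_distrib, mul_comm]
    ring_nf
  simp only [MeasurableEquiv.symm_symm, MeasurableEquiv.coe_toLp]
  simp only [h2]
  rw [integral_fintype_prod_volume_eq_prod
    (f := fun (i : Fin (n + 1)) (x : ℝ) =>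
      if i = 0 then x ^ (2 * k) * exp (-x ^ 2 / 2) else exp (-x ^ 2 / 2)),
    Fin.prod_univ_succ]
  simp only [Fin.succ_ne_zero, if_true, if_false, integral_even_pow_mul_exp_neg_sq_div_two]
  have h3 : ∫ x : ℝ, exp (-x ^ 2 / 2) = √(2 * π) := by
    have := integral_gaussian (1 / 2)
    rw [show π / (1 / 2) = 2 * π by ring] at this
    rw [← this]
    congr with x
    ring_nf
  simp [h3, mul_comm]

lemma integral_exp_neg_norm_sq_mul_inner_pow_eq_sphere {E : Type*} [NormedAddCommGroup E]
    [InnerProductSpace ℝ E] [FiniteDimensional ℝ E] [MeasurableSpace E] [BorelSpace E]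
    [Nontrivial E] (u : E) (k : ℕ) :
    ∫ x : E, exp (-‖x‖ ^ 2 / 2) * inner ℝ u x ^ k =
      (∫ ω : Metric.sphere (0 : E) 1, inner ℝ u (ω : E) ^ k ∂((volume : Measure E).toSphere)) *
      ∫ x in Set.Ioi (0 : ℝ), x ^ (Module.finrank ℝ E - 1 + k) * exp (-x ^ 2 / 2) := by
  calc
    _ = ∫ x : ({(0)}ᶜ : Set E), exp (-‖x.1‖ ^ 2 / 2) * inner ℝ u x.1 ^ k
        ∂((volume : Measure E).comap (↑)) := by
      rw [integral_subtype_comap (measurableSet_singleton _).compl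
        fun x : E ↦ exp (-‖x‖ ^ 2 / 2) * inner ℝ u x ^ k, restrict_compl_singleton]
    _ = ∫ p : Metric.sphere (0 : E) 1 × Set.Ioi (0 : ℝ),
          inner ℝ u (p.1 : E) ^ k * (exp (-(p.2 : ℝ) ^ 2 / 2) * (p.2 : ℝ) ^ k)
          ∂(volume : Measure E).toSphere.prod (.volumeIoiPow (Module.finrank ℝ E - 1)) := by
      rw [← (volume : Measure E).measurePreserving_homeomorphUnitSphereProd.integral_comp
        (Homeomorph.measurableEmbedding _)]
      refine integral_congr_ae (.of_forall fun x => ?_)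
      have hx : ‖x.1‖ ≠ 0 := norm_ne_zero_iff.2 x.2
      simp only [homeomorphUnitSphereProd_apply_fst_coe, homeomorphUnitSphereProd_apply_snd_coe,
        inner_smul_right, mul_pow, inv_pow]
      field_simp
    _ = _ := by
      rw [integral_prod_mul (fun ω : Metric.sphere (0 : E) 1 => inner ℝ u (ω : E) ^ k)
        (fun x : Set.Ioi (0 : ℝ) => exp (-(x : ℝ) ^ 2 / 2) * (x : ℝ) ^ k)]
      congr 1
      simp only [Measure.volumeIoiPow, ENNReal.ofReal]
      rw [integral_withDensity_eq_integral_smul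
        ((measurable_subtype_coe.pow_const _).real_toNNReal),
        integral_subtype_comap measurableSet_Ioi fun a ↦
          Real.toNNReal (a ^ (Module.finrank ℝ E - 1)) • (exp (-a ^ 2 / 2) * a ^ k)]
      refine setIntegral_congr_fun measurableSet_Ioi fun x hx ↦ ?_
      simp only [NNReal.smul_def, Real.coe_toNNReal _ (pow_nonneg (Set.mem_Ioi.1 hx).le _),
        smul_eq_mul]
      ring

lemma integral_sphere_inner_pow (m : ℕ) (a : EuclideanSpace ℝ (Fin (2 * m + 1))) (ha : a ≠ 0)
    (k : ℕ) :
    ∫ ω : Metric.sphere (0 : EuclideanSpace ℝ (Fin (2 * m + 1))) 1,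
      inner ℝ a (ω : EuclideanSpace ℝ (Fin (2 * m + 1))) ^ (2 * k)
        ∂((volume : Measure (EuclideanSpace ℝ (Fin (2 * m + 1)))).toSphere) =
      ‖a‖ ^ (2 * k) * (2 * (2 * π) ^ m / ∏ i ∈ Finset.range m, (2 * (k : ℝ) + 2 * i + 1)) := by
  have hn : ‖a‖ ≠ 0 := norm_ne_zero_iff.2 ha
  have hu : ‖(‖a‖⁻¹ • a)‖ = 1 := by simp [norm_smul, hn]
  have h1 := integral_exp_neg_norm_sq_mul_inner_pow _ hu k
  rw [integral_exp_neg_norm_sq_mul_inner_pow_eq_sphere] at h1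
  have h2 : ∫ x in Set.Ioi (0 : ℝ), x ^ (2 * m + 2 * k) * exp (-x ^ 2 / 2) =
      halfGaussianMoment (k + m) := by
    rw [halfGaussianMoment, mul_add, add_comm]
  rw [finrank_euclideanSpace_fin, Nat.add_sub_cancel, h2, halfGaussianMoment_add] at h1
  simp only [real_inner_smul_left, mul_pow, integral_const_mul] at h1
  have hk := (halfGaussianMoment_pos k).ne'
  have hp : (∏ i ∈ Finset.range m, (2 * (k : ℝ) + 2 * i + 1)) ≠ 0 :=
    Finset.prod_ne_zero_iff.2 fun i _ => by positivity
  rw [pow_mul (√(2 * π)), sq_sqrt (by positivity), inv_pow] at h1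
  field_simp at h1 ⊢
  linarith

lemma abs_inner_sphere_le {n : ℕ} (a : EuclideanSpace ℝ (Fin n))
    (ω : Metric.sphere (0 : EuclideanSpace ℝ (Fin n)) 1) :
    |inner ℝ a (ω : EuclideanSpace ℝ (Fin n))| ≤ ‖a‖ := by
  simpa using abs_real_inner_le_norm a (ω : EuclideanSpace ℝ (Fin n))

lemma hasSum_integral_sphere_cos_inner (m : ℕ) (a : EuclideanSpace ℝ (Fin (2 * m + 1)))
    (ha : a ≠ 0) (t : ℝ) :
    HasSum (fun k : ℕ => (-1) ^ k * (t * ‖a‖) ^ (2 * k) / (2 * k).factorial *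
        (2 * (2 * π) ^ m / ∏ i ∈ Finset.range m, (2 * (k : ℝ) + 2 * i + 1)))
      (∫ ω : Metric.sphere (0 : EuclideanSpace ℝ (Fin (2 * m + 1))) 1,
        cos (t * inner ℝ a (ω : EuclideanSpace ℝ (Fin (2 * m + 1))))
          ∂((volume : Measure (EuclideanSpace ℝ (Fin (2 * m + 1)))).toSphere)) := by
  have h := hasSum_integral_of_dominated_convergence
    (μ := (volume : Measure (EuclideanSpace ℝ (Fin (2 * m + 1)))).toSphere)
    (F := fun (k : ℕ) ω => (-1) ^ k *
      (t * inner ℝ a (ω : EuclideanSpace ℝ (Fin (2 * m + 1)))) ^ (2 * k) / (2 * k).factorial)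
    (f := fun ω => cos (t * inner ℝ a (ω : EuclideanSpace ℝ (Fin (2 * m + 1)))))
    (fun k _ => (|t| * ‖a‖) ^ (2 * k) / (2 * k).factorial)
    (fun k => by
      refine Continuous.aestronglyMeasurable ?_
      fun_prop)
    (fun k => .of_forall fun ω => by
      simp only [norm_div, norm_mul, norm_pow, norm_neg, norm_one, one_pow, one_mul,
        norm_eq_abs, Nat.abs_cast]
      gcongr
      exact abs_inner_sphere_le a ω)
    (.of_forall fun _ => (hasSum_cosh _).summable)
    (integrable_const _)
    (.of_forall fun ω => hasSum_cos _)
  convert! h using 2 with k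
  have : ∀ ω : Metric.sphere (0 : EuclideanSpace ℝ (Fin (2 * m + 1))) 1,
      (-1) ^ k * (t * inner ℝ a (ω : EuclideanSpace ℝ (Fin (2 * m + 1)))) ^ (2 * k) /
        (2 * k).factorial = ((-1) ^ k * t ^ (2 * k) / (2 * k).factorial) *
        inner ℝ a (ω : EuclideanSpace ℝ (Fin (2 * m + 1))) ^ (2 * k) := fun ω => by
    rw [mul_pow]; ring
  simp only [this, integral_const_mul, integral_sphere_inner_pow m a ha]
  rw [mul_pow]; ring

lemma prod_cos_eq_sum_cos {ι : Type*} [Fintype ι] [DecidableEq ι] (x : ι → ℝ) :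
    ∏ i, cos (x i) = (1 / 2 ^ Fintype.card ι) *
      ∑ s : Finset ι, cos (∑ i, (if i ∈ s then 1 else -1) * x i) := by
  have h : ∀ i, (cos (x i) : ℂ) =
      (1 / 2) * (Complex.exp (x i * Complex.I) + Complex.exp (-x i * Complex.I)) := fun i => by
    rw [Complex.ofReal_cos, Complex.cos]; ring
  have key : ((∏ i, cos (x i) : ℝ) : ℂ) = ((1 / 2 ^ Fintype.card ι : ℝ) : ℂ) *
      ∑ s : Finset ι, Complex.exp
        ((∑ i, (if i ∈ s then 1 else -1) * x i : ℝ) * Complex.I) := by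
    push_cast
    simp only [← Complex.ofReal_cos, h, Finset.prod_mul_distrib, Finset.prod_const,
      Finset.card_univ, Finset.prod_add, Finset.powerset_univ, one_div, inv_pow]
    congr 1
    refine Finset.sum_congr rfl fun s _ => ?_
    rw [Finset.sum_mul, Complex.exp_sum, ← Finset.prod_mul_prod_compl s, Finset.compl_eq_univ_sdiff]
    congr 1
    · refine Finset.prod_congr rfl fun i hi => ?_
      simp [hi]
    · refine Finset.prod_congr rfl fun i hi => ?_
      have : i ∉ s := (Finset.mem_sdiff.1 hi).2
      simp [this]
  have := congrArg Complex.re key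
  rw [Complex.ofReal_re, Complex.re_ofReal_mul, Complex.re_sum] at this
  simpa only [Complex.exp_ofReal_mul_I_re] using this

lemma sqrt_sum_sq_ne_zero {ι : Type*} [Fintype ι] {a : ι → ℝ} (ha : a ≠ 0) :
    √(∑ i, a i ^ 2) ≠ 0 := by
  obtain ⟨i, hi⟩ := Function.ne_iff.1 ha
  exact (sqrt_pos.2 (Finset.sum_pos' (fun j _ => sq_nonneg _)
    ⟨i, Finset.mem_univ i, sq_pos_of_ne_zero hi⟩)).ne'

lemma hasSum_integral_sphere_prod_cos (m : ℕ) (a : Fin (2 * m + 1) → ℝ) (ha : a ≠ 0) (t : ℝ) :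
    HasSum (fun k : ℕ => (-1) ^ k * (t * √(∑ i, a i ^ 2)) ^ (2 * k) / (2 * k).factorial *
        (2 * (2 * π) ^ m / ∏ i ∈ Finset.range m, (2 * (k : ℝ) + 2 * i + 1)))
      (∫ ω : Metric.sphere (0 : EuclideanSpace ℝ (Fin (2 * m + 1))) 1,
        ∏ i, cos (t * (ω : EuclideanSpace ℝ (Fin (2 * m + 1))) i * a i)
          ∂((volume : Measure (EuclideanSpace ℝ (Fin (2 * m + 1)))).toSphere)) := by
  let A : Finset (Fin (2 * m + 1)) → EuclideanSpace ℝ (Fin (2 * m + 1)) := fun s =>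
    WithLp.toLp 2 fun i => (if i ∈ s then 1 else -1) * a i
  have hnorm : ∀ s, ‖A s‖ = √(∑ i, a i ^ 2) := fun s => by
    rw [EuclideanSpace.norm_eq]
    congr 1
    refine Finset.sum_congr rfl fun i _ => ?_
    simp only [A]
    split_ifs <;> simp
  have hpos := sqrt_sum_sq_ne_zero ha
  have hA : ∀ s, A s ≠ 0 := fun s => by
    rw [← norm_ne_zero_iff, hnorm]; exact hpos
  have hprod : ∀ ω : Metric.sphere (0 : EuclideanSpace ℝ (Fin (2 * m + 1))) 1,
      ∏ i, cos (t * (ω : EuclideanSpace ℝ (Fin (2 * m + 1))) i * a i) =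
      (1 / 2 ^ (2 * m + 1)) * ∑ s : Finset (Fin (2 * m + 1)),
        cos (t * inner ℝ (A s) (ω : EuclideanSpace ℝ (Fin (2 * m + 1)))) := fun ω => by
    rw [prod_cos_eq_sum_cos, Fintype.card_fin]
    congr 1
    refine Finset.sum_congr rfl fun s _ => ?_
    congr 1
    simp only [A, PiLp.inner_apply, Finset.mul_sum]
    refine Finset.sum_congr rfl fun i _ => ?_
    simp [mul_assoc]
  simp only [hprod, integral_const_mul]
  rw [integral_finsetSum _ fun s _ => ?_]
  · have h := (hasSum_sum fun s (_ : s ∈ Finset.univ) =>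
      hasSum_integral_sphere_cos_inner m (A s) (hA s) t).mul_left ((1 : ℝ) / 2 ^ (2 * m + 1))
    simp only [hnorm, Finset.sum_const, Finset.card_univ, Fintype.card_finset, Fintype.card_fin,
      nsmul_eq_mul] at h
    convert! h using 2 with k
    push_cast
    field_simp
  · refine Integrable.of_bound (Continuous.aestronglyMeasurable (by fun_prop)) 1
      (.of_forall fun ω => ?_)
    exact abs_cos_le_one _

/-- The function `∑ₖ (-1)ᵏ r²ᵏ t²ᵏ⁺²ʲ⁺¹ / ((2k)! (2k+1)(2k+3)⋯(2k+2j+1))`, which for `j = 0` is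
`sin (r t) / r` and which `Dop` lowers from `j + 1` to `j`. -/
noncomputable def sinSeries (r : ℝ) (j : ℕ) (t : ℝ) : ℝ :=
  ∑' k : ℕ, (-1) ^ k * r ^ (2 * k) / (2 * k).factorial /
    (∏ i ∈ Finset.range (j + 1), (2 * (k : ℝ) + 2 * i + 1)) * t ^ (2 * k + 2 * j + 1)

lemma sinSeries_zero (r : ℝ) (hr : r ≠ 0) (t : ℝ) : sinSeries r 0 t = sin (t * r) / r := by
  rw [← ((hasSum_sin (t * r)).div_const r).tsum_eq, sinSeries]
  refine tsum_congr fun k => ?_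
  simp only [zero_add, Finset.prod_range_one, Nat.factorial_succ, mul_zero, add_zero,
    CharP.cast_eq_zero]
  push_cast
  field_simp
  rw [mul_pow]
  ring

lemma hasDerivAt_sinSeries_succ (r : ℝ) (j : ℕ) (t : ℝ) :
    HasDerivAt (sinSeries r (j + 1)) (t * sinSeries r j t) t := by
  have hP : ∀ k n : ℕ, 1 ≤ ∏ i ∈ Finset.range n, (2 * (k : ℝ) + 2 * i + 1) := fun k n =>
    Finset.one_le_prod fun i _ => by
      have : (0 : ℝ) ≤ 2 * (k : ℝ) + 2 * i := by positivity
      linarith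
  set R := |t| + 1
  have h := hasDerivAt_tsum_of_isPreconnected
    (u := fun k : ℕ => (|r| * R) ^ (2 * k) / (2 * k).factorial * R ^ (2 * j + 2))
    (t := Metric.ball (0 : ℝ) R)
    (g := fun k t => (-1) ^ k * r ^ (2 * k) / (2 * k).factorial /
      (∏ i ∈ Finset.range (j + 1 + 1), (2 * (k : ℝ) + 2 * i + 1)) * t ^ (2 * k + 2 * (j + 1) + 1))
    (g' := fun k t => t * ((-1) ^ k * r ^ (2 * k) / (2 * k).factorial /
      (∏ i ∈ Finset.range (j + 1), (2 * (k : ℝ) + 2 * i + 1)) * t ^ (2 * k + 2 * j + 1)))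
    (y₀ := 0) (y := t)
    ((hasSum_cosh _).summable.mul_right _) Metric.isOpen_ball
    (convex_ball _ _).isPreconnected ?_ ?_ ?_ ?_ ?_
  · rw [tsum_mul_left] at h
    exact h
  · intro k y _
    refine ((hasDerivAt_pow (2 * k + 2 * (j + 1) + 1) y).const_mul _).congr_deriv ?_
    rw [Finset.prod_range_succ _ (j + 1)]
    have h1 := (zero_lt_one.trans_le (hP k (j + 1))).ne'
    have h2 : (2 * (k : ℝ) + 2 * (j + 1) + 1) ≠ 0 := by positivity
    simp only [Nat.add_sub_cancel]
    push_cast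
    field_simp
    ring
  · intro k y hy
    have hy' : |y| ≤ R := by simpa using (Metric.mem_ball.1 hy).le
    rw [show y * ((-1) ^ k * r ^ (2 * k) / (2 * k).factorial /
      (∏ i ∈ Finset.range (j + 1), (2 * (k : ℝ) + 2 * i + 1)) * y ^ (2 * k + 2 * j + 1)) =
      (-1) ^ k * (r * y) ^ (2 * k) / (2 * k).factorial * y ^ (2 * j + 2) /
      (∏ i ∈ Finset.range (j + 1), (2 * (k : ℝ) + 2 * i + 1)) by
        rw [mul_pow]; ring]
    rw [norm_div, norm_of_nonneg (zero_le_one.trans (hP k (j + 1)))]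
    refine (div_le_self (norm_nonneg _) (hP k (j + 1))).trans ?_
    simp only [norm_div, norm_mul, norm_pow, norm_neg, norm_one, one_pow, one_mul,
        norm_eq_abs, Nat.abs_cast]
    gcongr
  · simp [R]; positivity
  · simp
  · simp [R]

lemma iterate_Dop_eq_mul_sinSeries (r C : ℝ) (j : ℕ) :
    ∀ f : ℝ → ℝ, (∀ t > 0, f t = C * sinSeries r j t) →
      ∀ t > 0, Dop^[j] f t = C * sinSeries r 0 t := by
  induction j with
  | zero => exact fun f hf => hf
  | succ j ih =>
    intro f hf
    rw [Function.iterate_succ_apply]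
    refine ih _ fun t ht => ?_
    have h : f =ᶠ[nhds t] fun t => C * sinSeries r (j + 1) t :=
      Filter.eventually_of_mem (Ioi_mem_nhds ht) hf
    rw [Dop, h.deriv_eq, ((hasDerivAt_sinSeries_succ r j t).const_mul C).deriv]
    field_simp

theorem stmt10 (m : ℕ) (hm : 1 ≤ m) (a : Fin (2*m+1) → ℝ) (ha : a ≠ 0)
    (G : ℝ → ℝ)
    (hG : ∀ t : ℝ, G t = t ^ (2*m-1) *
      ∫ ω : Metric.sphere (0 : EuclideanSpace ℝ (Fin (2*m+1))) 1,
        ∏ i, Real.cos (t * (ω : EuclideanSpace ℝ (Fin (2*m+1))) i * a i)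
        ∂((volume : Measure (EuclideanSpace ℝ (Fin (2*m+1)))).toSphere)) :
    ∀ t ∈ Set.Ioi (0:ℝ),
      Real.sin (t * Real.sqrt (∑ i, (a i)^2)) / Real.sqrt (∑ i, (a i)^2) =
        (1 / (2 * (2*π)^m)) * (Dop^[m-1] G) t := by
  intro t ht
  have hpos := sqrt_sum_sq_ne_zero ha
  obtain ⟨j, rfl⟩ : ∃ j, m = j + 1 := ⟨m - 1, by omega⟩
  have hGs : ∀ t > 0, G t = (2 * (2 * π) ^ (j + 1)) * sinSeries (√(∑ i, a i ^ 2)) j t := by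
    intro t _
    rw [hG, ← (hasSum_integral_sphere_prod_cos (j + 1) a ha t).tsum_eq, sinSeries, ← tsum_mul_left,
      ← tsum_mul_left]
    refine tsum_congr fun k => ?_
    rw [show 2 * (j + 1) - 1 = 2 * j + 1 by omega, mul_pow t]
    ring
  rw [Nat.add_sub_cancel, iterate_Dop_eq_mul_sinSeries _ _ j G hGs t ht, sinSeries_zero _ hpos]
  field_simp
end
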